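/- Let ε > 0, c ∈ (0, 1/2], and p, q ∈ [0,1]^S with P = P_p and Q = P_q. Suppose: (i) min_{k∈{1,…,m}} Pr_P[Π_k] ≥ 2ε; (ii) either every entry of p lies in [c, 1−c] or every entry of q lies in [c, 1−c]; and (iii) (3/c)·√(Σ_{k=1}^m Pr_P[Π_k]·(p_k − q_k)²) ≤ ε. Then d_TV(P, Q) ≤ ε. -/

import Mathlib

open scoped BigOperators Classical

/-- The index set `S` of parental configurations: pairs `(i, a)` where
`a : Parents i → Bool`. -/
abbrev BNIdx (d : ℕ) (Par : Fin d → Finset (Fin d)) :=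
  (i : Fin d) × ({j : Fin d // j ∈ Par i} → Bool)

/-- The restriction of `x ∈ {0,1}^d` to the parents of node `i`. -/
def cfgOf {d : ℕ} (Par : Fin d → Finset (Fin d)) (x : Fin d → Bool) (i : Fin d) :
    {j : Fin d // j ∈ Par i} → Bool :=
  fun j => x j.1

/-- The Bayesian network `P_p` with conditional probability table `p`. -/
noncomputable def bnDist {d : ℕ} (Par : Fin d → Finset (Fin d))
    (p : BNIdx d Par → ℝ) (x : Fin d → Bool) : ℝ :=
  ∏ i : Fin d, if x i then p ⟨i, cfgOf Par x i⟩ else 1 - p ⟨i, cfgOf Par x i⟩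

/-- `Pr_R[Π_k]`, the probability of the parental configuration `k` under `R`. -/
noncomputable def prCfg {d : ℕ} (Par : Fin d → Finset (Fin d))
    (R : (Fin d → Bool) → ℝ) (k : BNIdx d Par) : ℝ :=
  ∑ x : Fin d → Bool, if cfgOf Par x k.1 = k.2 then R x else 0

/-- Probability of an event `A` under `R`. -/
noncomputable def prEvent {d : ℕ} (R : (Fin d → Bool) → ℝ)
    (A : (Fin d → Bool) → Prop) : ℝ :=
  ∑ x : Fin d → Bool, if A x then R x else 0

/-- Expectation `E_{X ∼ R}[g(X)]`. -/
noncomputable def expec {d : ℕ} (R : (Fin d → Bool) → ℝ)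
    (g : (Fin d → Bool) → ℝ) : ℝ :=
  ∑ x : Fin d → Bool, R x * g x

/-- The vector `F(x, q) ∈ ℝ^S`. -/
noncomputable def Fvec {d : ℕ} (Par : Fin d → Finset (Fin d))
    (x : Fin d → Bool) (q : BNIdx d Par → ℝ) (k : BNIdx d Par) : ℝ :=
  if cfgOf Par x k.1 = k.2 then (if x k.1 then 1 else 0) else q k

/-- `R` is a probability distribution on the finite set `D`. -/
def IsProbDist {D : Type*} [Fintype D] (R : D → ℝ) : Prop :=
  (∀ x, 0 ≤ R x) ∧ ∑ x, R x = 1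

/-- Total variation distance. -/
noncomputable def dTV {D : Type*} [Fintype D] (A B : D → ℝ) : ℝ :=
  (∑ x, |A x - B x|) / 2

/-- Squared Hellinger distance `d_H(A,B)² = 1 - Σ √(A(x)·B(x))`. -/
noncomputable def hellingerSq {D : Type*} [Fintype D] (A B : D → ℝ) : ℝ :=
  1 - ∑ x, Real.sqrt (A x * B x)

/-- Euclidean norm on `ℝ^ι`. -/
noncomputable def enorm2 {ι : Type*} [Fintype ι] (v : ι → ℝ) : ℝ :=
  Real.sqrt (∑ k, v k ^ 2)

/-- The second-moment matrix `M_R` (relative to `q`). -/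
noncomputable def covM {d : ℕ} (Par : Fin d → Finset (Fin d))
    (R : (Fin d → Bool) → ℝ) (q : BNIdx d Par → ℝ) :
    Matrix (BNIdx d Par) (BNIdx d Par) ℝ :=
  fun k l => expec R (fun x => (Fvec Par x q k - q k) * (Fvec Par x q l - q l))

/-- `M_R^0`: the matrix `M_R` with zeroed diagonal. -/
noncomputable def covM0 {d : ℕ} (Par : Fin d → Finset (Fin d))
    (R : (Fin d → Bool) → ℝ) (q : BNIdx d Par → ℝ) :
    Matrix (BNIdx d Par) (BNIdx d Par) ℝ :=
  fun k l => if k = l then 0 else covM Par R q k l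

/-- Spectral norm (ℓ²-operator norm) of a real matrix. -/
noncomputable def specNorm {ι : Type*} [Fintype ι] [DecidableEq ι]
    (M : Matrix ι ι ℝ) : ℝ :=
  ‖Matrix.toEuclideanCLM (𝕜 := ℝ) M‖



def flipAt {d : ℕ} (i : Fin d) (x : Fin d → Bool) : Fin d → Bool :=
  Function.update x i (!x i)

lemma flipAt_self {d : ℕ} (i : Fin d) (x : Fin d → Bool) : flipAt i x i = !x i := by
  simp [flipAt]

lemma flipAt_ne {d : ℕ} (i j : Fin d) (h : j ≠ i) (x : Fin d → Bool) :
    flipAt i x j = x j := by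
  simp [flipAt, h]

lemma flipAt_invol {d : ℕ} (i : Fin d) : Function.Involutive (flipAt i) := by
  intro x
  funext j
  by_cases h : j = i
  · subst h; simp [flipAt_self]
  · simp [flipAt_ne i j h]

lemma sum_flipAt {d : ℕ} (i : Fin d) (g : (Fin d → Bool) → ℝ) :
    ∑ x, g (flipAt i x) = ∑ x, g x :=
  Equiv.sum_comp (flipAt_invol i).toPerm g

def Gpart {d : ℕ} (F : Fin d → (Fin d → Bool) → ℝ) (n : ℕ) (x : Fin d → Bool) : ℝ :=
  ∏ i : Fin d, if i.val < n then F i x else 1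

lemma Gpart_succ {d : ℕ} (F : Fin d → (Fin d → Bool) → ℝ) (i : Fin d) (x : Fin d → Bool) :
    Gpart F (i.val + 1) x = Gpart F i.val x * F i x := by
  have : F i x = ∏ j : Fin d, if j = i then F j x else 1 := by simp
  rw [this, Gpart, Gpart, ← Finset.prod_mul_distrib]
  apply Finset.prod_congr rfl
  intro j _
  by_cases h : j = i
  · subst h; simp
  · have h' : j.val ≠ i.val := fun e => h (Fin.ext e)
    have : j.val < i.val + 1 ↔ j.val < i.val := by omega
    simp [h, this]

lemma Gpart_flip {d : ℕ} (F : Fin d → (Fin d → Bool) → ℝ)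
    (hF1 : ∀ i x y, (∀ j : Fin d, j ≤ i → x j = y j) → F i x = F i y)
    (i : Fin d) (x : Fin d → Bool) :
    Gpart F i.val (flipAt i x) = Gpart F i.val x := by
  apply Finset.prod_congr rfl
  intro j _
  split_ifs with h
  · apply hF1
    intro k hk
    apply flipAt_ne
    rintro rfl
    exact absurd h (by simpa using hk)
  · rfl

/-- if `f * F i` cancels under a flip at `i` down to `g`. -/
lemma sum_step {d : ℕ} (F : Fin d → (Fin d → Bool) → ℝ)
    (hF1 : ∀ i x y, (∀ j : Fin d, j ≤ i → x j = y j) → F i x = F i y)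
    (i : Fin d) (f g : (Fin d → Bool) → ℝ)
    (h : ∀ x, f x * F i x + f (flipAt i x) * F i (flipAt i x) = g x) :
    2 * ∑ x, f x * Gpart F (i.val + 1) x = ∑ x, g x * Gpart F i.val x := by
  rw [two_mul]
  nth_rewrite 2 [← sum_flipAt i]
  rw [← Finset.sum_add_distrib]
  apply Finset.sum_congr rfl
  intro x _
  rw [Gpart_succ, Gpart_succ, Gpart_flip F hF1, ← h]
  ring

lemma sum_extend {d : ℕ} (F : Fin d → (Fin d → Bool) → ℝ)
    (hF1 : ∀ i x y, (∀ j : Fin d, j ≤ i → x j = y j) → F i x = F i y)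
    (hF2 : ∀ i x, F i x + F i (flipAt i x) = 1)
    (n : ℕ) (f : (Fin d → Bool) → ℝ)
    (hf : ∀ x y, (∀ j : Fin d, j.val < n → x j = y j) → f x = f y)
    (m : ℕ) (hm : n ≤ m) (hmd : m ≤ d) :
    2 ^ (m - n) * ∑ x, f x * Gpart F m x = ∑ x, f x * Gpart F n x := by
  induction m, hm using Nat.le_induction with
  | base => simp
  | succ m hm ih =>
    rw [← ih (by omega), Nat.succ_sub hm, pow_succ, mul_assoc]
    congr 1
    apply sum_step F hF1 ⟨m, by omega⟩
    intro x
    have : f (flipAt ⟨m, by omega⟩ x) = f x := by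
      apply hf
      intro j hj
      apply flipAt_ne
      rintro rfl
      simp at hj
      omega
    rw [this, ← mul_add, hF2, mul_one]

lemma Gpart_full {d : ℕ} (F : Fin d → (Fin d → Bool) → ℝ) (x : Fin d → Bool) :
    Gpart F d x = ∏ i, F i x := by
  simp [Gpart]

lemma sum_one {d : ℕ} (F : Fin d → (Fin d → Bool) → ℝ)
    (hF1 : ∀ i x y, (∀ j : Fin d, j ≤ i → x j = y j) → F i x = F i y)
    (hF2 : ∀ i x, F i x + F i (flipAt i x) = 1) :
    ∑ x, ∏ i, F i x = 1 := by
  have h := sum_extend F hF1 hF2 0 (fun _ => 1) (fun _ _ _ => rfl) d (Nat.zero_le _) le_rfl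
  simp only [Gpart_full, one_mul] at h
  simp [Gpart] at h
  exact h

lemma sum_zero {d : ℕ} (F : Fin d → (Fin d → Bool) → ℝ)
    (hF1 : ∀ i x y, (∀ j : Fin d, j ≤ i → x j = y j) → F i x = F i y)
    (hF2 : ∀ i x, F i x + F i (flipAt i x) = 1)
    (i : Fin d) (f : (Fin d → Bool) → ℝ)
    (hf : ∀ x y, (∀ j : Fin d, j ≤ i → x j = y j) → f x = f y)
    (h : ∀ x, f x * F i x + f (flipAt i x) * F i (flipAt i x) = 0) :
    ∑ x, f x * ∏ i, F i x = 0 := by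
  have h1 := sum_extend F hF1 hF2 (i.val + 1) f
    (fun x y hxy => hf x y (fun j hj => hxy j (Nat.lt_succ_of_le hj))) d i.2 le_rfl
  have h2 := sum_step F hF1 i f (fun _ => 0) h
  simp only [Gpart_full] at h1
  simp only [zero_mul, Finset.sum_const_zero] at h2
  have h3 : ∑ x, f x * Gpart F (i.val + 1) x = 0 := by linarith
  rw [h3] at h1
  have : (2:ℝ) ^ (d - (i.val + 1)) ≠ 0 := by positivity
  exact (mul_eq_zero.mp h1).resolve_left this

noncomputable def bnF {d : ℕ} (Par : Fin d → Finset (Fin d))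
    (p : BNIdx d Par → ℝ) (i : Fin d) (x : Fin d → Bool) : ℝ :=
  if x i then p ⟨i, cfgOf Par x i⟩ else 1 - p ⟨i, cfgOf Par x i⟩

lemma cfg_congr {d : ℕ} (Par : Fin d → Finset (Fin d))
    (hpar : ∀ i : Fin d, ∀ j ∈ Par i, j < i) (i : Fin d) (x y : Fin d → Bool)
    (h : ∀ j : Fin d, j < i → x j = y j) : cfgOf Par x i = cfgOf Par y i := by
  funext j
  exact h _ (hpar i j.1 j.2)

lemma cfg_flip {d : ℕ} (Par : Fin d → Finset (Fin d))
    (hpar : ∀ i : Fin d, ∀ j ∈ Par i, j < i) (i : Fin d) (x : Fin d → Bool) :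
    cfgOf Par (flipAt i x) i = cfgOf Par x i :=
  cfg_congr Par hpar i _ _ (fun j hj => flipAt_ne i j hj.ne x)

lemma bnF1 {d : ℕ} (Par : Fin d → Finset (Fin d))
    (hpar : ∀ i : Fin d, ∀ j ∈ Par i, j < i) (p : BNIdx d Par → ℝ) :
    ∀ i x y, (∀ j : Fin d, j ≤ i → x j = y j) → bnF Par p i x = bnF Par p i y := by
  intro i x y h
  rw [bnF, bnF, cfg_congr Par hpar i x y (fun j hj => h j hj.le), h i le_rfl]

lemma bnF2 {d : ℕ} (Par : Fin d → Finset (Fin d))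
    (hpar : ∀ i : Fin d, ∀ j ∈ Par i, j < i) (p : BNIdx d Par → ℝ) :
    ∀ i x, bnF Par p i x + bnF Par p i (flipAt i x) = 1 := by
  intro i x
  rw [bnF, bnF, cfg_flip Par hpar, flipAt_self]
  cases x i <;> simp

lemma bnDist_eq {d : ℕ} (Par : Fin d → Finset (Fin d)) (p : BNIdx d Par → ℝ)
    (x : Fin d → Bool) : bnDist Par p x = ∏ i, bnF Par p i x := rfl

lemma bnF_nonneg {d : ℕ} (Par : Fin d → Finset (Fin d)) (p : BNIdx d Par → ℝ)
    (hp : ∀ k, p k ∈ Set.Icc (0:ℝ) 1) (i : Fin d) (x : Fin d → Bool) :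
    0 ≤ bnF Par p i x := by
  have := hp ⟨i, cfgOf Par x i⟩
  rw [bnF]
  split_ifs
  · exact this.1
  · linarith [this.2]

lemma bnDist_nonneg {d : ℕ} (Par : Fin d → Finset (Fin d)) (p : BNIdx d Par → ℝ)
    (hp : ∀ k, p k ∈ Set.Icc (0:ℝ) 1) (x : Fin d → Bool) :
    0 ≤ bnDist Par p x :=
  Finset.prod_nonneg (fun i _ => bnF_nonneg Par p hp i x)

lemma bnDist_sum {d : ℕ} (Par : Fin d → Finset (Fin d))
    (hpar : ∀ i : Fin d, ∀ j ∈ Par i, j < i) (p : BNIdx d Par → ℝ) :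
    ∑ x, bnDist Par p x = 1 :=
  sum_one (bnF Par p) (bnF1 Par hpar p) (bnF2 Par hpar p)

noncomputable def chiOf {d : ℕ} {Par : Fin d → Finset (Fin d)} (p q : BNIdx d Par → ℝ)
    (k : BNIdx d Par) : ℝ := (p k - q k) ^ 2 / (q k * (1 - q k))

lemma chi_chain {d : ℕ} (Par : Fin d → Finset (Fin d))
    (hpar : ∀ i : Fin d, ∀ j ∈ Par i, j < i) (p q : BNIdx d Par → ℝ)
    (hq : ∀ k, q k ∈ Set.Ioo (0:ℝ) 1) (i : Fin d) :
    ∑ x, (bnF Par p i x / bnF Par q i x - 1) * bnDist Par p x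
      = ∑ x, chiOf p q ⟨i, cfgOf Par x i⟩ * bnDist Par p x := by
  rw [← sub_eq_zero, ← Finset.sum_sub_distrib]
  have := sum_zero (bnF Par p) (bnF1 Par hpar p) (bnF2 Par hpar p) i
    (fun x => (bnF Par p i x / bnF Par q i x - 1) - chiOf p q ⟨i, cfgOf Par x i⟩) ?_ ?_
  · rw [← this]
    apply Finset.sum_congr rfl
    intro x _
    rw [bnDist_eq]; ring
  · intro x y h
    rw [bnF1 Par hpar p i x y h, bnF1 Par hpar q i x y h,
      cfg_congr Par hpar i x y (fun j hj => h j hj.le)]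
  · intro x
    simp only [bnF, cfg_flip Par hpar, flipAt_self, chiOf]
    obtain ⟨h0, h1⟩ := hq ⟨i, cfgOf Par x i⟩
    have h1' : 1 - q ⟨i, cfgOf Par x i⟩ ≠ 0 := by linarith
    have h0' := h0.ne'
    generalize q ⟨i, cfgOf Par x i⟩ = b at *
    generalize p ⟨i, cfgOf Par x i⟩ = a at *
    cases x i <;> simp <;> field_simp <;> ring

lemma sum_prCfg {d : ℕ} (Par : Fin d → Finset (Fin d)) (R : (Fin d → Bool) → ℝ)
    (g : BNIdx d Par → ℝ) :
    ∑ i, ∑ x, g ⟨i, cfgOf Par x i⟩ * R x = ∑ k, prCfg Par R k * g k := by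
  rw [Fintype.sum_sigma]
  apply Finset.sum_congr rfl
  intro i _
  simp only [prCfg, Finset.sum_mul]
  rw [Finset.sum_comm]
  apply Finset.sum_congr rfl
  intro x _
  simp [ite_mul, mul_comm]

lemma sqrt_bound {d : ℕ} (Par : Fin d → Finset (Fin d)) (p q : BNIdx d Par → ℝ)
    (hp : ∀ k, p k ∈ Set.Icc (0:ℝ) 1)
    (hq : ∀ k, q k ∈ Set.Ioo (0:ℝ) 1) (x : Fin d → Bool) :
    bnDist Par p x * (1 - (∑ i, (bnF Par p i x / bnF Par q i x - 1)) / 2)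
      ≤ Real.sqrt (bnDist Par p x * bnDist Par q x) := by
  set s := ∑ i, (bnF Par p i x / bnF Par q i x - 1) with hs
  have hP := bnDist_nonneg Par p hp x
  have h1 : bnDist Par p x ≤ bnDist Par q x * Real.exp s := by
    rw [hs, Real.exp_sum, bnDist_eq, bnDist_eq, ← Finset.prod_mul_distrib]
    apply Finset.prod_le_prod
    · intro i _; exact bnF_nonneg Par p hp i x
    · intro i _
      have hqp : 0 < bnF Par q i x := by
        have := hq ⟨i, cfgOf Par x i⟩
        rw [bnF]
        split_ifs
        · exact this.1
        · linarith [this.2]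
      have h := Real.add_one_le_exp (bnF Par p i x / bnF Par q i x - 1)
      rw [sub_add_cancel, div_le_iff₀ hqp] at h
      linarith
  have h2 : 1 - s / 2 ≤ Real.exp (-s/2) := by
    have := Real.add_one_le_exp (-s/2)
    linarith
  refine (mul_le_mul_of_nonneg_left h2 hP).trans ?_
  apply Real.le_sqrt_of_sq_le
  have h3 : Real.exp (-s/2) ^ 2 * Real.exp s = 1 := by
    rw [← Real.exp_nat_mul, ← Real.exp_add]
    rw [Real.exp_eq_one_iff]; push_cast; ring
  calc (bnDist Par p x * Real.exp (-s/2)) ^ 2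
      = bnDist Par p x * Real.exp (-s/2) ^ 2 * bnDist Par p x := by ring
    _ ≤ bnDist Par p x * Real.exp (-s/2) ^ 2 * (bnDist Par q x * Real.exp s) := by
        apply mul_le_mul_of_nonneg_left h1; positivity
    _ = bnDist Par p x * bnDist Par q x * (Real.exp (-s/2) ^ 2 * Real.exp s) := by ring
    _ = _ := by rw [h3, mul_one]

lemma tv_sq_le {D : Type*} [Fintype D] (A B : D → ℝ) (hA : ∀ x, 0 ≤ A x) (hB : ∀ x, 0 ≤ B x)
    (sA : ∑ x, A x = 1) (sB : ∑ x, B x = 1) :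
    (dTV A B) ^ 2 ≤ 2 * (1 - ∑ x, Real.sqrt (A x * B x)) := by
  have e : ∀ x, |A x - B x| = |√(A x) - √(B x)| * (√(A x) + √(B x)) := by
    intro x
    have h : 0 ≤ √(A x) + √(B x) := by positivity
    have h' : √(A x) + √(B x) = |√(A x) + √(B x)| := (abs_of_nonneg h).symm
    rw [h', ← abs_mul]
    congr 1
    nlinarith [Real.sq_sqrt (hA x), Real.sq_sqrt (hB x)]
  have cs := Finset.sum_mul_sq_le_sq_mul_sq Finset.univ
    (fun x => |√(A x) - √(B x)|) (fun x => √(A x) + √(B x))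
  have e1 : ∑ x, |√(A x) - √(B x)| ^ 2 = 2 - 2 * ∑ x, √(A x * B x) := by
    have : ∀ x, |√(A x) - √(B x)| ^ 2 = A x + B x - 2 * √(A x * B x) := by
      intro x
      rw [sq_abs, Real.sqrt_mul (hA x)]
      nlinarith [Real.sq_sqrt (hA x), Real.sq_sqrt (hB x)]
    simp only [this, Finset.sum_sub_distrib, Finset.sum_add_distrib, ← Finset.mul_sum, sA, sB]
    ring
  have e2 : ∑ x, (√(A x) + √(B x)) ^ 2 = 2 + 2 * ∑ x, √(A x * B x) := by
    have : ∀ x, (√(A x) + √(B x)) ^ 2 = A x + B x + 2 * √(A x * B x) := by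
      intro x
      rw [Real.sqrt_mul (hA x)]
      nlinarith [Real.sq_sqrt (hA x), Real.sq_sqrt (hB x)]
    simp only [this, Finset.sum_add_distrib, ← Finset.mul_sum, sA, sB]
    ring
  simp only [← e] at cs
  rw [e1, e2] at cs
  rw [dTV, div_pow]
  nlinarith [sq_nonneg (1 - ∑ x, √(A x * B x))]

theorem tv_le_of_balanced_and_min_config_prob
    (d : ℕ) (hd : 1 ≤ d) (Par : Fin d → Finset (Fin d))
    (hpar : ∀ i : Fin d, ∀ j ∈ Par i, j < i)
    (ε c : ℝ) (hε : 0 < ε) (hc : c ∈ Set.Ioc (0:ℝ) (1/2))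
    (p q : BNIdx d Par → ℝ)
    (hp : ∀ k, p k ∈ Set.Icc (0:ℝ) 1) (hq : ∀ k, q k ∈ Set.Icc (0:ℝ) 1)
    (hmin : ∀ k, 2 * ε ≤ prCfg Par (bnDist Par p) k)
    (hbal : (∀ k, p k ∈ Set.Icc c (1 - c)) ∨ (∀ k, q k ∈ Set.Icc c (1 - c)))
    (hsum : (3 / c) * Real.sqrt (∑ k : BNIdx d Par,
        prCfg Par (bnDist Par p) k * (p k - q k) ^ 2) ≤ ε) :
    dTV (bnDist Par p) (bnDist Par q) ≤ ε := by
  obtain ⟨hc0, hc1⟩ := hc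
  set P := bnDist Par p with hPdef
  have hP0 : ∀ x, 0 ≤ P x := bnDist_nonneg Par p hp
  have hP1 : ∑ x, P x = 1 := bnDist_sum Par hpar p
  have hPr0 : ∀ k, 0 ≤ prCfg Par P k := fun k => by linarith [hmin k]
  have hPr1 : ∀ k, prCfg Par P k ≤ 1 := by
    intro k
    rw [← hP1]
    apply Finset.sum_le_sum
    intro x _
    split_ifs
    · exact le_rfl
    · exact hP0 x
  set X := ∑ k : BNIdx d Par, prCfg Par P k * (p k - q k) ^ 2 with hX
  have hX0 : 0 ≤ X := Finset.sum_nonneg (fun k _ => mul_nonneg (hPr0 k) (sq_nonneg _))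
  have hXb : 9 * X ≤ c ^ 2 * ε ^ 2 := by
    have h1 : 3 * √X ≤ c * ε := by
      rw [div_mul_eq_mul_div, div_le_iff₀ hc0] at hsum
      linarith
    have h2 : (3 * √X) ^ 2 ≤ (c * ε) ^ 2 := pow_le_pow_left₀ (by positivity) h1 2
    rw [mul_pow, Real.sq_sqrt hX0, mul_pow] at h2
    linarith
  have hqb : ∀ k, q k ∈ Set.Icc (5 * c / 6) (1 - 5 * c / 6) := by
    rcases hbal with hb | hb
    · intro k
      have h1 : prCfg Par P k * (p k - q k) ^ 2 ≤ X :=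
        Finset.single_le_sum (f := fun k => prCfg Par P k * (p k - q k) ^ 2)
          (fun k _ => mul_nonneg (hPr0 k) (sq_nonneg _)) (Finset.mem_univ k)
      have h2 : 2 * ε * (p k - q k) ^ 2 ≤ X :=
        (mul_le_mul_of_nonneg_right (hmin k) (sq_nonneg _)).trans h1
      have hε1 : ε ≤ 1 / 2 := by linarith [hmin k, hPr1 k]
      have h3 : ε * (18 * (p k - q k) ^ 2) ≤ ε * (c ^ 2 * ε) := by nlinarith
      have h4 := le_of_mul_le_mul_left h3 hε
      have h5 : (p k - q k) ^ 2 ≤ (c / 6) ^ 2 := by nlinarith [sq_nonneg c]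
      have h6 := abs_le_of_sq_le_sq' h5 (by positivity)
      obtain ⟨h7, h8⟩ := hb k
      constructor <;> linarith [h6.1, h6.2]
    · intro k
      obtain ⟨h7, h8⟩ := hb k
      constructor <;> linarith
  have hq' : ∀ k, q k ∈ Set.Ioo (0:ℝ) 1 := by
    intro k
    obtain ⟨h7, h8⟩ := hqb k
    constructor <;> linarith
  have hchi : ∀ k, chiOf p q k ≤ 3 / c * (p k - q k) ^ 2 := by
    intro k
    obtain ⟨h7, h8⟩ := hqb k
    obtain ⟨h1, h2⟩ := hq' k
    have h3 : c / 3 ≤ q k * (1 - q k) := by nlinarith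
    rw [chiOf]
    calc (p k - q k) ^ 2 / (q k * (1 - q k)) ≤ (p k - q k) ^ 2 / (c / 3) := by gcongr
      _ = _ := by field_simp
  have hKL : ∑ x, P x * (∑ i, (bnF Par p i x / bnF Par q i x - 1)) ≤ 3 / c * X := by
    calc ∑ x, P x * (∑ i, (bnF Par p i x / bnF Par q i x - 1))
        = ∑ i, ∑ x, (bnF Par p i x / bnF Par q i x - 1) * P x := by
          rw [Finset.sum_comm]
          apply Finset.sum_congr rfl
          intro x _
          rw [mul_comm, Finset.sum_mul]
      _ = ∑ k, prCfg Par P k * chiOf p q k := by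
          rw [← sum_prCfg]
          exact Finset.sum_congr rfl (fun i _ => chi_chain Par hpar p q hq' i)
      _ ≤ ∑ k, prCfg Par P k * (3 / c * (p k - q k) ^ 2) :=
          Finset.sum_le_sum (fun k _ => mul_le_mul_of_nonneg_left (hchi k) (hPr0 k))
      _ = 3 / c * X := by
          rw [hX, Finset.mul_sum]
          exact Finset.sum_congr rfl (fun k _ => by ring)
  have hBC : 1 - (3 / c * X) / 2 ≤ ∑ x, √(P x * bnDist Par q x) := by
    have h1 := Finset.sum_le_sum (fun x (_ : x ∈ Finset.univ) => sqrt_bound Par p q hp hq' x)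
    have h2 : ∑ x, P x * (1 - (∑ i, (bnF Par p i x / bnF Par q i x - 1)) / 2)
        = 1 - (∑ x, P x * (∑ i, (bnF Par p i x / bnF Par q i x - 1))) / 2 := by
      rw [← hP1, Finset.sum_div, ← Finset.sum_sub_distrib, hP1]
      exact Finset.sum_congr rfl (fun x _ => by ring)
    rw [← hPdef] at h1
    rw [h2] at h1
    linarith
  have htv := tv_sq_le P (bnDist Par q) hP0 (bnDist_nonneg Par q hq) hP1 (bnDist_sum Par hpar q)
  have hfin : 3 / c * X ≤ ε ^ 2 := by
    rw [div_mul_eq_mul_div, div_le_iff₀ hc0]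
    nlinarith [mul_nonneg (sq_nonneg ε) hc0.le]
  exact le_of_sq_le_sq (by linarith) hε.le
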